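/- For every n ≥ 2, the map (i, j) ↦ (i, j'), where j' = (n − 1) − level(i) − j, is a well-defined involution of the endgame poset P_n and is an order anti-automorphism of P_n (x ≤ y if and only if the image of y is ≤ the image of x). -/

import Mathlib

/-!
The reflection `psi` fixes the node and reverses the range `0, …, n - 1 - level i` of firings of
node `i`, so it is an involution of `P_n`. It reverses generating relations: an edge from a node to
its child, `(i, j) < (2i, j)` or `(i, j) < (2i+1, j)`, is exchanged with an edge from a child to its
parent, `(i, j) < (⌊i/2⌋, j+1)`, because `level` grows by one when passing to a child
(`covStep_psi`). Reversal passes to the reflexive-transitive closure (`Ple_psi`), and the converse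
implication follows by involutivity.
-/

/-- The level of node `i` in the infinite binary tree: `⌊log₂ i⌋ + 1`. -/
def level (i : ℕ) : ℕ := Nat.log 2 i + 1

/-- Membership in the endgame poset `P_n`: the pairs `(i, j)` with `i ≥ 1` and
`level i + j < n`, where `(i, j)` represents the `j`-th-from-last firing of node `i`. -/
def memP (n : ℕ) (x : ℕ × ℕ) : Prop := 1 ≤ x.1 ∧ level x.1 + x.2 < n

/-- The generating (covering) relations of `P_n`: `(i, j) < (2i, j)`, `(i, j) < (2i+1, j)`,
and, for `i ≥ 2`, `(i, j) < (⌊i/2⌋, j+1)`, whenever both pairs involved lie in `P_n`. -/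
def covStep (n : ℕ) (x y : ℕ × ℕ) : Prop :=
  memP n x ∧ memP n y ∧
    (y = (2 * x.1, x.2) ∨ y = (2 * x.1 + 1, x.2) ∨ (2 ≤ x.1 ∧ y = (x.1 / 2, x.2 + 1)))

/-- The partial order of `P_n`: the reflexive-transitive closure of the generating
relations. -/
def Ple (n : ℕ) (x y : ℕ × ℕ) : Prop := Relation.ReflTransGen (covStep n) x y

/-- The strict order of `P_n`. -/
def Plt (n : ℕ) (x y : ℕ × ℕ) : Prop := Ple n x y ∧ x ≠ y

/-- The rank function `ρ((i, j)) = level i + 2j`. -/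
def rho (x : ℕ × ℕ) : ℕ := level x.1 + 2 * x.2

/-- `z` is the join (least upper bound) of `x` and `y` in `P_n`. -/
def IsJoin (n : ℕ) (x y z : ℕ × ℕ) : Prop :=
  memP n z ∧ Ple n x z ∧ Ple n y z ∧
    ∀ w, memP n w → Ple n x w → Ple n y w → Ple n z w

/-- `z` is the meet (greatest lower bound) of `x` and `y` in `P_n`. -/
def IsMeet (n : ℕ) (x y z : ℕ × ℕ) : Prop :=
  memP n z ∧ Ple n z x ∧ Ple n z y ∧
    ∀ w, memP n w → Ple n w x → Ple n w y → Ple n w z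

/-- The horizontal reflection `(i, j) ↦ (i, j')` with `j' = (n − 1) − level i − j`. -/
def psi (n : ℕ) (x : ℕ × ℕ) : ℕ × ℕ := (x.1, n - 1 - level x.1 - x.2)

theorem level_two_mul {i : ℕ} (hi : 1 ≤ i) : level (2 * i) = level i + 1 := by
  unfold level
  rw [mul_comm, Nat.log_mul_base (by norm_num) (by omega)]

theorem level_half {i : ℕ} (hi : 2 ≤ i) : level i = level (i / 2) + 1 := by
  unfold level
  rw [Nat.log_of_one_lt_of_le (by norm_num) hi]

theorem level_two_mul_add_one {i : ℕ} (hi : 1 ≤ i) : level (2 * i + 1) = level i + 1 := by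
  rw [level_half (by omega), show (2 * i + 1) / 2 = i by omega]

theorem memP_psi {n : ℕ} {x : ℕ × ℕ} (hx : memP n x) : memP n (psi n x) := by
  obtain ⟨h1, h2⟩ := hx
  refine ⟨h1, ?_⟩
  simp only [psi]
  omega

theorem psi_psi {n : ℕ} {x : ℕ × ℕ} (hx : memP n x) : psi n (psi n x) = x := by
  obtain ⟨h1, h2⟩ := hx
  refine Prod.ext rfl ?_
  simp only [psi]
  omega

/-- The reflection exchanges parent-to-child edges with child-to-parent edges, reversing them. -/
theorem covStep_psi {n : ℕ} {x y : ℕ × ℕ} (h : covStep n x y) :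
    covStep n (psi n y) (psi n x) := by
  obtain ⟨hx, hy, h⟩ := h
  refine ⟨memP_psi hy, memP_psi hx, ?_⟩
  obtain ⟨i, j⟩ := x
  obtain ⟨hi, hxn⟩ := hx
  obtain ⟨-, hyn⟩ := hy
  simp only at hi hxn
  rcases h with rfl | rfl | ⟨h2, rfl⟩
  · have hl := level_two_mul hi
    simp only [psi, Prod.mk.injEq] at hyn ⊢
    omega
  · have hl := level_two_mul_add_one hi
    simp only [psi, Prod.mk.injEq] at hyn ⊢
    omega
  · -- Whether `i` is the left or the right child of `i / 2` depends on its parity.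
    have hl := level_half h2
    simp only [psi, Prod.mk.injEq] at h2 hyn hl ⊢
    omega

theorem Ple_psi {n : ℕ} {x y : ℕ × ℕ} (h : Ple n x y) : Ple n (psi n y) (psi n x) := by
  unfold Ple at *
  induction h with
  | refl => exact .refl
  | tail _ hstep ih => exact .head (covStep_psi hstep) ih

/-- For every `n ≥ 2`, the map `(i, j) ↦ (i, (n − 1) − level i − j)` is a well-defined
involution of `P_n` and an order anti-automorphism of `P_n`. -/
theorem stmt17 (n : ℕ) (hn : 2 ≤ n) :
    (∀ x, memP n x → memP n (psi n x)) ∧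
    (∀ x, memP n x → psi n (psi n x) = x) ∧
    (∀ x y, memP n x → memP n y → (Ple n x y ↔ Ple n (psi n y) (psi n x))) := by
  refine ⟨fun x => memP_psi, fun x => psi_psi, fun x y hx hy => ⟨Ple_psi, fun h => ?_⟩⟩
  simpa only [psi_psi hx, psi_psi hy] using Ple_psi h
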